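/- Let M and M̂ be two finite MDPs differing only in transition kernels P and P̂, with rewards bounded by R_max ≥ 0 and discount γ ∈ [0,1). For any policy π, η_M(π) − η_{M̂}(π) ≥ −(2γ R_max/(1−γ)^2) · E_{(s,a)~ρ̂}[ D_TV( P(·|s,a), P̂(·|s,a) ) ], where D_TV is total variation distance and ρ̂ is the normalized discounted occupancy of π under M̂. -/

import Mathlib

open Finset

/-- One-step evolution of a state-action distribution under kernel `P` and policy `pol`. -/
noncomputable def stepDist {S A : Type*} [Fintype S] [Fintype A]
    (P : S → A → S → ℝ) (pol : S → A → ℝ) (d : S → A → ℝ) : S → A → ℝ :=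
  fun s' a' => (∑ s, ∑ a, d s a * P s a s') * pol s' a'

/-- State-action distribution at time `t` when starting from `ρ0` and following `pol` in `P`. -/
noncomputable def traj {S A : Type*} [Fintype S] [Fintype A]
    (P : S → A → S → ℝ) (pol : S → A → ℝ) (ρ0 : S → ℝ) : ℕ → S → A → ℝ :=
  fun t => (stepDist P pol)^[t] (fun s a => ρ0 s * pol s a)

/-- Discounted return `η_M(π)` of policy `pol` in the MDP with kernel `P`. -/
noncomputable def ret {S A : Type*} [Fintype S] [Fintype A]
    (P : S → A → S → ℝ) (pol : S → A → ℝ) (ρ0 : S → ℝ) (r : S → A → ℝ) (γ : ℝ) : ℝ :=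
  ∑' t : ℕ, γ ^ t * ∑ s, ∑ a, traj P pol ρ0 t s a * r s a

/-- Value function `V^π_M(s)`. -/
noncomputable def Vf {S A : Type*} [Fintype S] [Fintype A] [DecidableEq S]
    (P : S → A → S → ℝ) (pol : S → A → ℝ) (r : S → A → ℝ) (γ : ℝ) (s0 : S) : ℝ :=
  ret P pol (fun s => if s = s0 then 1 else 0) r γ

/-- Normalized discounted state-action occupancy `ρ̂(s,a)` of `pol` in kernel `P`. -/
noncomputable def occ {S A : Type*} [Fintype S] [Fintype A]
    (P : S → A → S → ℝ) (pol : S → A → ℝ) (ρ0 : S → ℝ) (γ : ℝ) : S → A → ℝ :=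
  fun s a => (1 - γ) * ∑' t : ℕ, γ ^ t * traj P pol ρ0 t s a

theorem traj_zero' {S A : Type*} [Fintype S] [Fintype A]
    (P : S → A → S → ℝ) (pol : S → A → ℝ) (ρ0 : S → ℝ) (s : S) (a : A) :
    traj P pol ρ0 0 s a = ρ0 s * pol s a := rfl

theorem traj_succ' {S A : Type*} [Fintype S] [Fintype A]
    (P : S → A → S → ℝ) (pol : S → A → ℝ) (ρ0 : S → ℝ) (t : ℕ) (s' : S) (a' : A) :
    traj P pol ρ0 (t + 1) s' a' = (∑ s, ∑ a, traj P pol ρ0 t s a * P s a s') * pol s' a' := by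
  simp only [traj, Function.iterate_succ_apply']
  rfl

theorem traj_nonneg' {S A : Type*} [Fintype S] [Fintype A]
    (P : S → A → S → ℝ) (pol : S → A → ℝ) (ρ0 : S → ℝ)
    (hρ0 : ∀ s, 0 ≤ ρ0 s) (hpol : ∀ s a, 0 ≤ pol s a) (hP : ∀ s a s', 0 ≤ P s a s')
    (t : ℕ) : ∀ s a, 0 ≤ traj P pol ρ0 t s a := by
  induction t with
  | zero => intro s a; rw [traj_zero']; exact mul_nonneg (hρ0 s) (hpol s a)
  | succ t ih =>
    intro s a
    rw [traj_succ']
    exact mul_nonneg (Finset.sum_nonneg fun x _ => Finset.sum_nonneg fun y _ =>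
      mul_nonneg (ih x y) (hP x y s)) (hpol s a)

/-- Pushing a weight through a kernel preserves total mass. -/
theorem push_sum {S A : Type*} [Fintype S] [Fintype A]
    (K : S → A → S → ℝ) (pol : S → A → ℝ) (hpolsum : ∀ s, ∑ a, pol s a = 1) :
    ∑ s', ∑ a', (∑ s, ∑ a, K s a s') * pol s' a' = ∑ s, ∑ a, ∑ s', K s a s' := by
  simp only [← Finset.mul_sum, hpolsum, mul_one]
  rw [Finset.sum_comm]
  refine Finset.sum_congr rfl fun s _ => ?_
  rw [Finset.sum_comm]

theorem traj_sum' {S A : Type*} [Fintype S] [Fintype A]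
    (P : S → A → S → ℝ) (pol : S → A → ℝ) (ρ0 : S → ℝ)
    (hρ0sum : ∑ s, ρ0 s = 1) (hpolsum : ∀ s, ∑ a, pol s a = 1)
    (hPsum : ∀ s a, ∑ s', P s a s' = 1)
    (t : ℕ) : ∑ s, ∑ a, traj P pol ρ0 t s a = 1 := by
  induction t with
  | zero => simp only [traj_zero', ← Finset.mul_sum, hpolsum, mul_one, hρ0sum]
  | succ t ih =>
    simp only [traj_succ']
    rw [push_sum (fun s a s' => traj P pol ρ0 t s a * P s a s') pol hpolsum]
    simp only [← Finset.mul_sum, hPsum, mul_one, ih]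

theorem traj_le_one' {S A : Type*} [Fintype S] [Fintype A]
    (P : S → A → S → ℝ) (pol : S → A → ℝ) (ρ0 : S → ℝ)
    (hρ0 : ∀ s, 0 ≤ ρ0 s) (hρ0sum : ∑ s, ρ0 s = 1)
    (hpol : ∀ s a, 0 ≤ pol s a) (hpolsum : ∀ s, ∑ a, pol s a = 1)
    (hP : ∀ s a s', 0 ≤ P s a s') (hPsum : ∀ s a, ∑ s', P s a s' = 1)
    (t : ℕ) (s : S) (a : A) : traj P pol ρ0 t s a ≤ 1 := by
  have h0 := traj_nonneg' P pol ρ0 hρ0 hpol hP t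
  rw [← traj_sum' P pol ρ0 hρ0sum hpolsum hPsum t]
  calc traj P pol ρ0 t s a ≤ ∑ a, traj P pol ρ0 t s a :=
        Finset.single_le_sum (f := fun a => traj P pol ρ0 t s a)
          (fun y _ => h0 s y) (Finset.mem_univ a)
    _ ≤ _ := Finset.single_le_sum (f := fun s => ∑ a, traj P pol ρ0 t s a)
          (fun x _ => Finset.sum_nonneg fun y _ => h0 x y) (Finset.mem_univ s)

theorem gap_step {S A : Type*} [Fintype S] [Fintype A]
    (P Phat : S → A → S → ℝ) (pol : S → A → ℝ) (ρ0 : S → ℝ)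
    (hρ0 : ∀ s, 0 ≤ ρ0 s)
    (hpol : ∀ s a, 0 ≤ pol s a) (hpolsum : ∀ s, ∑ a, pol s a = 1)
    (hP : ∀ s a s', 0 ≤ P s a s') (hPsum : ∀ s a, ∑ s', P s a s' = 1)
    (hPhat : ∀ s a s', 0 ≤ Phat s a s') (t : ℕ) :
    ∑ s, ∑ a, |traj P pol ρ0 (t + 1) s a - traj Phat pol ρ0 (t + 1) s a| ≤
      ∑ s, ∑ a, |traj P pol ρ0 t s a - traj Phat pol ρ0 t s a| +
      ∑ s, ∑ a, traj Phat pol ρ0 t s a * ∑ s', |P s a s' - Phat s a s'| := by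
  have h0 := traj_nonneg' Phat pol ρ0 hρ0 hpol hPhat t
  calc _ ≤ ∑ s', ∑ a', (∑ s, ∑ a, (|traj P pol ρ0 t s a - traj Phat pol ρ0 t s a| * P s a s'
            + traj Phat pol ρ0 t s a * |P s a s' - Phat s a s'|)) * pol s' a' := by
        refine Finset.sum_le_sum fun s' _ => Finset.sum_le_sum fun a' _ => ?_
        rw [traj_succ', traj_succ', ← sub_mul, abs_mul, abs_of_nonneg (hpol s' a')]
        refine mul_le_mul_of_nonneg_right ?_ (hpol s' a')
        rw [← Finset.sum_sub_distrib]
        refine (Finset.abs_sum_le_sum_abs _ _).trans (Finset.sum_le_sum fun s _ => ?_)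
        rw [← Finset.sum_sub_distrib]
        refine (Finset.abs_sum_le_sum_abs _ _).trans (Finset.sum_le_sum fun a _ => ?_)
        have : traj P pol ρ0 t s a * P s a s' - traj Phat pol ρ0 t s a * Phat s a s' =
          (traj P pol ρ0 t s a - traj Phat pol ρ0 t s a) * P s a s' +
          traj Phat pol ρ0 t s a * (P s a s' - Phat s a s') := by ring
        rw [this]
        refine (abs_add_le _ _).trans (le_of_eq ?_)
        rw [abs_mul, abs_mul, abs_of_nonneg (hP s a s'), abs_of_nonneg (h0 s a)]
    _ = _ := by
        rw [push_sum (fun s a s' => |traj P pol ρ0 t s a - traj Phat pol ρ0 t s a| * P s a s'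
            + traj Phat pol ρ0 t s a * |P s a s' - Phat s a s'|) pol hpolsum]
        simp only [Finset.sum_add_distrib, ← Finset.mul_sum, hPsum, mul_one]

theorem summable_disc (γ C : ℝ) (hγ0 : 0 ≤ γ) (hγ1 : γ < 1) (f : ℕ → ℝ)
    (hf : ∀ t, |f t| ≤ C) : Summable fun t => γ ^ t * f t := by
  refine Summable.of_norm_bounded ((summable_geometric_of_lt_one hγ0 hγ1).mul_right C) fun t => ?_
  rw [Real.norm_eq_abs, abs_mul, abs_of_nonneg (pow_nonneg hγ0 t)]
  exact mul_le_mul_of_nonneg_left (hf t) (pow_nonneg hγ0 t)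

/-- for two finite MDPs differing only in transitions,
`η_M(π) − η_{M̂}(π) ≥ −(2γR_max/(1−γ)²) E_{(s,a)~ρ̂}[D_TV(P(·|s,a), P̂(·|s,a))]`. -/
theorem return_gap_tv_bound
    {S A : Type*} [Fintype S] [Fintype A] [DecidableEq S]
    (P Phat : S → A → S → ℝ) (pol : S → A → ℝ) (ρ0 : S → ℝ)
    (r : S → A → ℝ) (γ Rmax : ℝ)
    (hγ0 : 0 ≤ γ) (hγ1 : γ < 1) (hRmax : 0 ≤ Rmax)
    (hr : ∀ s a, |r s a| ≤ Rmax)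
    (hρ0 : ∀ s, 0 ≤ ρ0 s) (hρ0sum : ∑ s, ρ0 s = 1)
    (hpol : ∀ s a, 0 ≤ pol s a) (hpolsum : ∀ s, ∑ a, pol s a = 1)
    (hP : ∀ s a s', 0 ≤ P s a s') (hPsum : ∀ s a, ∑ s', P s a s' = 1)
    (hPhat : ∀ s a s', 0 ≤ Phat s a s') (hPhatsum : ∀ s a, ∑ s', Phat s a s' = 1) :
    ret P pol ρ0 r γ - ret Phat pol ρ0 r γ
      ≥ -((2 * γ * Rmax / (1 - γ) ^ 2) *
          ∑ s, ∑ a, occ Phat pol ρ0 γ s a *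
            ((1 / 2) * ∑ s', |P s a s' - Phat s a s'|)) := by
  have h0 := traj_nonneg' P pol ρ0 hρ0 hpol hP
  have h0h := traj_nonneg' Phat pol ρ0 hρ0 hpol hPhat
  have h1 := traj_sum' P pol ρ0 hρ0sum hpolsum hPsum
  have h1h := traj_sum' Phat pol ρ0 hρ0sum hpolsum hPhatsum
  have hle := traj_le_one' Phat pol ρ0 hρ0 hρ0sum hpol hpolsum hPhat hPhatsum
  have hbd : ∀ d : S → A → ℝ, (∀ s a, 0 ≤ d s a) → ∑ s, ∑ a, d s a = 1 →
      |∑ s, ∑ a, d s a * r s a| ≤ Rmax := by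
    intro d hd hd1
    calc _ ≤ ∑ s, ∑ a, d s a * Rmax := by
          refine (Finset.abs_sum_le_sum_abs _ _).trans (Finset.sum_le_sum fun s _ => ?_)
          refine (Finset.abs_sum_le_sum_abs _ _).trans (Finset.sum_le_sum fun a _ => ?_)
          rw [abs_mul, abs_of_nonneg (hd s a)]
          exact mul_le_mul_of_nonneg_left (hr s a) (hd s a)
      _ = Rmax := by simp only [← Finset.sum_mul, hd1, one_mul]
  have hsR := summable_disc γ Rmax hγ0 hγ1 _ (fun t => hbd _ (h0 t) (h1 t))
  have hsRh := summable_disc γ Rmax hγ0 hγ1 _ (fun t => hbd _ (h0h t) (h1h t))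
  set e : ℕ → ℝ := fun t => ∑ s, ∑ a, |traj P pol ρ0 t s a - traj Phat pol ρ0 t s a| with he
  set w : S → A → ℝ := fun s a => ∑ s', |P s a s' - Phat s a s'| with hw
  set ε : ℕ → ℝ := fun t => ∑ s, ∑ a, traj Phat pol ρ0 t s a * w s a with hε
  have he0 : ∀ t, 0 ≤ e t := fun t =>
    Finset.sum_nonneg fun s _ => Finset.sum_nonneg fun a _ => abs_nonneg _
  have he2 : ∀ t, |e t| ≤ 2 := by
    intro t
    rw [abs_of_nonneg (he0 t)]
    calc e t ≤ ∑ s, ∑ a, (traj P pol ρ0 t s a + traj Phat pol ρ0 t s a) := by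
          refine Finset.sum_le_sum fun s _ => Finset.sum_le_sum fun a _ => ?_
          rw [abs_le]
          constructor <;> linarith [h0 t s a, h0h t s a]
      _ = 2 := by simp only [Finset.sum_add_distrib, h1, h1h]; norm_num
  have hse := summable_disc γ 2 hγ0 hγ1 e he2
  have hst : ∀ s a, Summable fun t => γ ^ t * traj Phat pol ρ0 t s a := fun s a =>
    summable_disc γ 1 hγ0 hγ1 _ fun t => by
      rw [abs_of_nonneg (h0h t s a)]; exact hle t s a
  have hεs : HasSum (fun t => γ ^ t * ε t)
      (∑ s, ∑ a, (∑' t, γ ^ t * traj Phat pol ρ0 t s a) * w s a) := by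
    have : HasSum (fun t => ∑ s, ∑ a, (γ ^ t * traj Phat pol ρ0 t s a) * w s a)
      (∑ s, ∑ a, (∑' t, γ ^ t * traj Phat pol ρ0 t s a) * w s a) :=
      hasSum_sum fun s _ => hasSum_sum fun a _ => (hst s a).hasSum.mul_right _
    convert this using 2 with t
    simp only [hε, Finset.mul_sum, mul_assoc]
  have hez : e 0 = 0 := by simp [he, traj_zero']
  have hE : ∑' t, γ ^ t * e t ≤ γ * ∑' t, γ ^ t * e t + γ * ∑' t, γ ^ t * ε t := by
    have hs1 : Summable fun t => γ ^ (t + 1) * e (t + 1) :=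
      (summable_nat_add_iff (f := fun t => γ ^ t * e t) 1).2 hse
    have hr : ∑' t, γ ^ t * e t = ∑' t, γ ^ (t + 1) * e (t + 1) := by
      rw [hse.tsum_eq_zero_add, hez, mul_zero, zero_add]
    have hR := (hse.mul_left γ).add (hεs.summable.mul_left γ)
    have key : ∑' t, γ ^ (t + 1) * e (t + 1) ≤
        ∑' t, (γ * (γ ^ t * e t) + γ * (γ ^ t * ε t)) := by
      refine hs1.tsum_le_tsum (fun t => ?_) hR
      have hstep : e (t + 1) ≤ e t + ε t :=
        gap_step P Phat pol ρ0 hρ0 hpol hpolsum hP hPsum hPhat t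
      have := mul_le_mul_of_nonneg_left hstep (pow_nonneg hγ0 (t + 1))
      calc _ ≤ _ := this
        _ = _ := by ring
    rw [(hse.mul_left γ).tsum_add (hεs.summable.mul_left γ), tsum_mul_left, tsum_mul_left] at key
    rw [← hr] at key
    exact key
  have hgap : -(Rmax * ∑' t, γ ^ t * e t) ≤ ret P pol ρ0 r γ - ret Phat pol ρ0 r γ := by
    unfold ret
    rw [← hsR.tsum_sub hsRh, ← tsum_mul_left, ← tsum_neg]
    refine (hse.mul_left Rmax).neg.tsum_le_tsum (fun t => ?_) (hsR.sub hsRh)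
    rw [← mul_sub]
    have : |∑ s, ∑ a, traj P pol ρ0 t s a * r s a - ∑ s, ∑ a, traj Phat pol ρ0 t s a * r s a|
        ≤ e t * Rmax := by
      simp only [he, Finset.sum_mul]
      rw [← Finset.sum_sub_distrib]
      refine (Finset.abs_sum_le_sum_abs _ _).trans (Finset.sum_le_sum fun s _ => ?_)
      rw [← Finset.sum_sub_distrib]
      refine (Finset.abs_sum_le_sum_abs _ _).trans (Finset.sum_le_sum fun a _ => ?_)
      rw [← sub_mul, abs_mul]
      exact mul_le_mul_of_nonneg_left (hr s a) (abs_nonneg _)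
    have h2 := mul_le_mul_of_nonneg_left (abs_le.1 this).1 (pow_nonneg hγ0 t)
    calc _ = γ ^ t * -(e t * Rmax) := by ring
      _ ≤ _ := h2
  have h1γ : 0 < 1 - γ := by linarith
  have hocc : ∑ s, ∑ a, occ Phat pol ρ0 γ s a * ((1 / 2) * w s a) =
      (1 - γ) / 2 * ∑' t, γ ^ t * ε t := by
    rw [hεs.tsum_eq]
    simp only [occ, Finset.mul_sum]
    refine Finset.sum_congr rfl fun s _ => Finset.sum_congr rfl fun a _ => ?_
    ring
  rw [hocc]
  have hE2 : ∑' t, γ ^ t * e t ≤ γ * (∑' t, γ ^ t * ε t) / (1 - γ) := by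
    rw [le_div_iff₀ h1γ]
    linarith
  have h3 := mul_le_mul_of_nonneg_left hE2 hRmax
  have h4 : 2 * γ * Rmax / (1 - γ) ^ 2 * ((1 - γ) / 2 * ∑' t, γ ^ t * ε t) =
      Rmax * (γ * (∑' t, γ ^ t * ε t) / (1 - γ)) := by
    field_simp
  rw [h4]
  linarith
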